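/- There exists a constant c > 0 such that for every x ∈ ℝ^N: |𝓛Φ(x)| ≤ c Φ(x), |∇Φ(x)| ≤ c Φ(x), and |∇(𝓛Φ)(x)| ≤ c Φ(x). (Here Φ is strictly positive.) -/

import Mathlib

open MeasureTheory Metric Real Set
open scoped InnerProductSpace ENNReal

noncomputable section

/-- `ℝ^n` as a Euclidean space. -/
abbrev Eu (n : ℕ) := EuclideanSpace ℝ (Fin n)

/-- The heat-kernel profile `Ψ_n` of the fractional Laplacian `(−Δ)^{σ/2}` in `ℝ^n`:
`Ψ_n(w) = (2π)^{−n} ∫_{ℝ^n} e^{−|ξ|^σ} e^{i w·ξ} dξ`. -/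
def Psi (n : ℕ) (σ : ℝ) (w : Eu n) : ℝ :=
  (2 * π) ^ (-(n : ℝ)) *
    (∫ ξ : Eu n, ((Real.exp (-‖ξ‖ ^ σ) : ℝ) : ℂ) *
      Complex.exp (Complex.I * (⟪w, ξ⟫_ℝ : ℂ))).re

/-- `LΨ_n`, the inverse Fourier transform of `|ξ|^σ e^{−|ξ|^σ}`. -/
def LPsi (n : ℕ) (σ : ℝ) (w : Eu n) : ℝ :=
  (2 * π) ^ (-(n : ℝ)) *
    (∫ ξ : Eu n, ((‖ξ‖ ^ σ * Real.exp (-‖ξ‖ ^ σ) : ℝ) : ℂ) *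
      Complex.exp (Complex.I * (⟪w, ξ⟫_ℝ : ℂ))).re

/-- `ℝ^N = ℝ^{n₁} × ⋯ × ℝ^{n_M}` (with the Euclidean norm), `N = n₁ + ⋯ + n_M`. -/
abbrev XSp {M : ℕ} (n : Fin M → ℕ) := PiLp 2 (fun k => Eu (n k))

/-- The heat-kernel profile `Φ(x) = ∏_k Ψ_{n_k}(x^k)` of `𝓛 = Σ_k (−Δ_{x^k})^{σ/2}`. -/
def PhiProd {M : ℕ} (n : Fin M → ℕ) (σ : ℝ) (x : XSp n) : ℝ :=
  ∏ k, Psi (n k) σ (x k)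

/-- `𝓛Φ(x) = Σ_k (LΨ_{n_k})(x^k) ∏_{i≠k} Ψ_{n_i}(x^i)`. -/
def LPhiProd {M : ℕ} (n : Fin M → ℕ) (σ : ℝ) (x : XSp n) : ℝ :=
  ∑ k, LPsi (n k) σ (x k) * ∏ i ∈ Finset.univ.erase k, Psi (n i) σ (x i)

/-!
Subordination writes `exp (-‖ξ‖ ^ σ)` as the average of the Gaussians `exp (-s * ‖ξ‖ ^ 2)` over the
law `μ` of the `σ / 2`-stable subordinator, so that `Ψ_d(w)` is a constant multiple of
`G_{d/2}(‖w‖ ^ 2)`, where `G_m(r) = ∫ s ^ (-m) * exp (-r / (4 * s)) dμ(s)`. Differentiation raises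
`m` by one: `∇ G_m(‖w‖ ^ 2) = -G_{m+1}(‖w‖ ^ 2) w / 2`. Since `r ^ m * G_m(r)` is of order
`r ^ (-σ / 2)` at infinity for every `m`, each power of `r` compensates one unit of `m`, and
`r ^ k * G_{m+j}(r) = O(G_m(r))` on `[0, ∞)` for `0 ≤ k ≤ j`. The scaling of the heat kernel gives
Euler's identity `σ LΨ_d = d Ψ_d + w · ∇Ψ_d`, so `LΨ_d` is a combination of `G_{d/2}` and
`‖w‖ ^ 2 * G_{d/2+1}`. Hence `Ψ_d`, `LΨ_d` and their gradients are bounded by multiples of `Ψ_d`, a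
property that is stable under products in separate variables.

The measure `μ` comes from the stable limit theorem for Pareto variables: the Laplace transforms of
their normalized sums converge to `exp (-t ^ α)`, and the limit law exists by compactness.
-/

open Filter Topology Asymptotics

/-! ### Stable laws -/

/-- Functions `t ↦ ∫ y ^ t dν(y)` of a probability measure `ν` on `[0, 1]`. Under `y = e ^ (-s)`
these are the Laplace transforms of the probability measures on `[0, ∞]`; the point at infinity is
allowed so that pointwise limits are again of this form. -/
def IsMomentFunction (f : ℝ → ℝ) : Prop :=
  ∃ ν : ProbabilityMeasure unitInterval, ∀ t, 0 < t →
    ∫ y : unitInterval, (y : ℝ) ^ t ∂(ν : Measure unitInterval) = f t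

lemma continuous_unitInterval_rpow {t : ℝ} (ht : 0 ≤ t) :
    Continuous fun y : unitInterval => (y : ℝ) ^ t :=
  continuous_subtype_val.rpow_const fun _ => Or.inr ht

lemma norm_unitInterval_rpow_le_one {t : ℝ} (ht : 0 ≤ t) (y : unitInterval) :
    ‖(y : ℝ) ^ t‖ ≤ 1 := by
  rw [Real.norm_of_nonneg (rpow_nonneg y.2.1 t)]
  exact rpow_le_one y.2.1 y.2.2 ht

lemma tendsto_integral_rpow_nhdsGT_zero (ν : Measure unitInterval) [IsFiniteMeasure ν] :
    Tendsto (fun t : ℝ => ∫ y : unitInterval, (y : ℝ) ^ t ∂ν) (𝓝[>] 0) (𝓝 (ν.real {0}ᶜ)) := by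
  rw [← integral_indicator_one (measurableSet_singleton 0).compl]
  refine tendsto_integral_filter_of_dominated_convergence (fun _ => 1)
    (eventually_mem_nhdsWithin.mono fun t ht =>
      (continuous_unitInterval_rpow (le_of_lt ht)).aestronglyMeasurable)
    (eventually_mem_nhdsWithin.mono fun t ht =>
      ae_of_all _ (norm_unitInterval_rpow_le_one (le_of_lt ht)))
    (integrable_const 1) (ae_of_all _ fun y => ?_)
  by_cases hy : y = 0
  · refine tendsto_const_nhds.congr' (eventually_mem_nhdsWithin.mono fun t ht => ?_)
    simp [hy, zero_rpow (ne_of_gt ht)]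
  · have hy' : (y : ℝ) ≠ 0 := unitInterval.coe_ne_zero.2 hy
    simpa [hy] using (continuousAt_const_rpow (b := 0) hy').tendsto.mono_left nhdsWithin_le_nhds

lemma tendsto_integral_rpow_atTop (ν : Measure unitInterval) [IsFiniteMeasure ν] :
    Tendsto (fun t : ℝ => ∫ y : unitInterval, (y : ℝ) ^ t ∂ν) atTop (𝓝 (ν.real {1})) := by
  rw [← integral_indicator_one (measurableSet_singleton 1)]
  refine tendsto_integral_filter_of_dominated_convergence (fun _ => 1)
    ((eventually_ge_atTop 0).mono fun t ht =>
      (continuous_unitInterval_rpow ht).aestronglyMeasurable)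
    ((eventually_ge_atTop 0).mono fun t ht =>
      ae_of_all _ (norm_unitInterval_rpow_le_one ht))
    (integrable_const 1) (ae_of_all _ fun y => ?_)
  by_cases hy : y = 1
  · simp [hy]
  · have hy' : (y : ℝ) < 1 := unitInterval.lt_one_iff_ne_one.2 hy
    simpa [hy] using tendsto_rpow_atTop_of_base_lt_one (y : ℝ) (by linarith [y.2.1]) hy'

lemma isMomentFunction_one : IsMomentFunction fun _ => 1 :=
  ⟨⟨Measure.dirac 1, inferInstance⟩, fun t _ => by simp⟩

lemma isMomentFunction_of_tendsto {ι : Type*} {l : Filter ι} [l.NeBot] {f : ι → ℝ → ℝ} {g : ℝ → ℝ}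
    (hf : ∀ i, IsMomentFunction (f i))
    (hg : ∀ t, 0 < t → Tendsto (fun i => f i t) l (𝓝 (g t))) : IsMomentFunction g := by
  choose ν hν using hf
  have hlim : Tendsto ν (Ultrafilter.of l) (𝓝 ((Ultrafilter.of l).map ν).lim) :=
    ((Ultrafilter.of l).map ν).le_nhds_lim
  refine ⟨((Ultrafilter.of l).map ν).lim, fun t ht => ?_⟩
  have hmoment := (ProbabilityMeasure.tendsto_iff_forall_integral_tendsto.1 hlim)
    (BoundedContinuousFunction.mkOfCompact ⟨_, continuous_unitInterval_rpow ht.le⟩)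
  simp only [BoundedContinuousFunction.mkOfCompact_apply, ContinuousMap.coe_mk, hν _ t ht]
    at hmoment
  exact tendsto_nhds_unique hmoment ((hg t ht).mono_left (Ultrafilter.of_le l))

namespace IsMomentFunction

variable {f g : ℝ → ℝ}

lemma mul (hf : IsMomentFunction f) (hg : IsMomentFunction g) :
    IsMomentFunction fun t => f t * g t := by
  obtain ⟨ν, hν⟩ := hf
  obtain ⟨ρ, hρ⟩ := hg
  have hm : Measurable fun p : unitInterval × unitInterval => p.1 * p.2 :=
    (continuous_fst.mul continuous_snd).measurable
  refine ⟨⟨((ν : Measure unitInterval).prod (ρ : Measure unitInterval)).map fun p => p.1 * p.2,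
    Measure.isProbabilityMeasure_map hm.aemeasurable⟩, fun t ht => ?_⟩
  beta_reduce
  rw [ProbabilityMeasure.coe_mk, integral_map hm.aemeasurable
    (continuous_unitInterval_rpow ht.le).aestronglyMeasurable, ← hν t ht, ← hρ t ht,
    ← integral_prod_mul]
  simp only [Set.Icc.coe_mul, mul_rpow (unitInterval.nonneg _) (unitInterval.nonneg _)]

lemma pow (hf : IsMomentFunction f) (k : ℕ) : IsMomentFunction fun t => f t ^ k := by
  induction k with
  | zero => simpa only [pow_zero] using isMomentFunction_one
  | succ k ih => simpa only [pow_succ] using ih.mul hf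

lemma comp_mul_const (hf : IsMomentFunction f) {c : ℝ} (hc : 0 < c) :
    IsMomentFunction fun t => f (t * c) := by
  obtain ⟨ν, hν⟩ := hf
  let φ : unitInterval → unitInterval := fun y =>
    ⟨(y : ℝ) ^ c, rpow_nonneg y.2.1 c, rpow_le_one y.2.1 y.2.2 hc.le⟩
  have hφ : Measurable φ := (continuous_unitInterval_rpow hc.le).measurable.subtype_mk
  refine ⟨⟨(ν : Measure unitInterval).map φ, Measure.isProbabilityMeasure_map hφ.aemeasurable⟩,
    fun t ht => ?_⟩
  beta_reduce
  rw [ProbabilityMeasure.coe_mk, integral_map hφ.aemeasurable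
    (continuous_unitInterval_rpow ht.le).aestronglyMeasurable, ← hν _ (mul_pos ht hc)]
  simp only [φ, ← rpow_mul (unitInterval.nonneg _), mul_comm c]

-- The laws with these Laplace transforms are in the domain of attraction of the `α`-stable law.
lemma exp_neg_rpow_of_tendsto (hf : IsMomentFunction f) {α C : ℝ} (hα : 0 < α) (hC : 0 < C)
    (h : Tendsto (fun l => (1 - f l) / l ^ α) (𝓝[>] 0) (𝓝 C)) :
    IsMomentFunction fun t => rexp (-t ^ α) := by
  let c : ℕ → ℝ := fun k => ((k + 1 : ℕ) * C) ^ (-α⁻¹)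
  have hc : ∀ k, 0 < c k := fun k => by positivity
  have hcα : ∀ k, ((k + 1 : ℕ) : ℝ) * c k ^ α = C⁻¹ := fun k => by
    rw [← rpow_mul (by positivity), neg_mul, inv_mul_cancel₀ hα.ne', rpow_neg_one]
    field_simp
  have hc0 : Tendsto c atTop (𝓝 0) :=
    (tendsto_rpow_neg_atTop (inv_pos.2 hα)).comp
      ((tendsto_natCast_atTop_atTop.comp (tendsto_add_atTop_nat 1)).atTop_mul_const hC)
  refine isMomentFunction_of_tendsto (l := atTop) (f := fun k t => f (t * c k) ^ (k + 1))
    (fun k => (hf.comp_mul_const (hc k)).pow (k + 1)) fun t ht => ?_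
  have htc : Tendsto (fun k => t * c k) atTop (𝓝[>] 0) :=
    tendsto_nhdsWithin_iff.2 ⟨by simpa using hc0.const_mul t,
      Eventually.of_forall fun k => mul_pos ht (hc k)⟩
  have hlog : Tendsto (fun k : ℕ => ((k + 1 : ℕ) : ℝ) * (f (t * c k) - 1)) atTop (𝓝 (-t ^ α)) := by
    have hscaled := (h.comp htc).const_mul (-(t ^ α / C))
    rw [neg_mul, div_mul_cancel₀ _ hC.ne'] at hscaled
    refine hscaled.congr fun k => ?_
    have : c k ^ α ≠ 0 := (rpow_pos_of_pos (hc k) α).ne'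
    rw [Function.comp_apply, mul_rpow ht.le (hc k).le, div_eq_mul_inv, ← hcα k]
    field_simp
    ring
  have hpow := Real.tendsto_one_add_pow_exp_of_tendsto (g := fun k => f (t * c (k - 1)) - 1)
    ((tendsto_add_atTop_iff_nat 1).1 hlog)
  simpa [Function.comp_def] using hpow.comp (tendsto_add_atTop_nat 1)

lemma exists_isProbabilityMeasure_integral_exp_neg_mul (hf : IsMomentFunction f)
    (hf0 : Tendsto f (𝓝[>] 0) (𝓝 1)) (hf1 : Tendsto f atTop (𝓝 0)) :
    ∃ μ : Measure ℝ, IsProbabilityMeasure μ ∧ (∀ᵐ s ∂μ, 0 < s) ∧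
      ∀ t, 0 < t → ∫ s, rexp (-(t * s)) ∂μ = f t := by
  obtain ⟨⟨ν, _⟩, hν⟩ := hf
  simp only [ProbabilityMeasure.coe_mk] at hν
  have hne_zero : ∀ᵐ y ∂ν, y ≠ 0 := by
    have hcompl : ν.real {0}ᶜ = 1 := tendsto_nhds_unique (tendsto_integral_rpow_nhdsGT_zero ν)
      (hf0.congr' (eventually_mem_nhdsWithin.mono fun t ht => (hν t ht).symm))
    rw [probReal_compl_eq_one_sub (measurableSet_singleton 0), sub_eq_self,
      measureReal_eq_zero_iff] at hcompl
    exact compl_mem_ae_iff.2 hcompl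
  have hne_one : ∀ᵐ y ∂ν, y ≠ 1 := by
    have hone : ν.real {1} = 0 := tendsto_nhds_unique (tendsto_integral_rpow_atTop ν)
      (hf1.congr' ((eventually_gt_atTop 0).mono fun t ht => (hν t ht).symm))
    exact compl_mem_ae_iff.2 ((measureReal_eq_zero_iff).1 hone)
  have hlog : Measurable fun y : unitInterval => -Real.log y := by fun_prop
  refine ⟨ν.map fun y : unitInterval => -Real.log y,
    Measure.isProbabilityMeasure_map hlog.aemeasurable, ?_, fun t ht => ?_⟩
  · rw [ae_map_iff hlog.aemeasurable measurableSet_Ioi]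
    filter_upwards [hne_zero, hne_one] with y hy0 hy1
    exact neg_pos.2 (Real.log_neg (unitInterval.pos_iff_ne_zero.2 hy0)
      (unitInterval.lt_one_iff_ne_one.2 hy1))
  · rw [integral_map hlog.aemeasurable (by fun_prop), ← hν t ht]
    refine integral_congr_ae (hne_zero.mono fun y hy0 => ?_)
    beta_reduce
    rw [rpow_def_of_pos (unitInterval.pos_iff_ne_zero.2 hy0), mul_neg, neg_neg, mul_comm]

end IsMomentFunction

/-- The Laplace transform of the Pareto law with density `α * s ^ (-α - 1)` on `(1, ∞)`, i.e. of
`u ^ (-α⁻¹)` for `u` uniform on `(0, 1)`. It is the explicit law in the domain of attraction of the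
`α`-stable law from which the latter is built. -/
def paretoLaplace (α t : ℝ) : ℝ :=
  ∫ u in (0 : ℝ)..1, rexp (-(t * u ^ (-α⁻¹)))

lemma isMomentFunction_paretoLaplace (α : ℝ) : IsMomentFunction (paretoLaplace α) := by
  let φ : unitInterval → unitInterval := fun u => ⟨rexp (-(u : ℝ) ^ (-α⁻¹)), (exp_pos _).le,
    exp_le_one_iff.2 (neg_nonpos.2 (rpow_nonneg u.2.1 _))⟩
  have hφ : Measurable φ := Measurable.subtype_mk (by fun_prop)
  refine ⟨⟨(volume : Measure unitInterval).map φ, Measure.isProbabilityMeasure_map hφ.aemeasurable⟩,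
    fun t ht => ?_⟩
  rw [ProbabilityMeasure.coe_mk, integral_map hφ.aemeasurable
    (continuous_unitInterval_rpow ht.le).aestronglyMeasurable, paretoLaplace,
    intervalIntegral.integral_of_le zero_le_one, ← integral_Icc_eq_integral_Ioc,
    ← integral_subtype_comap measurableSet_Icc]
  refine integral_congr_ae (ae_of_all _ fun u => ?_)
  simp only [φ, ← exp_mul, neg_mul, mul_comm t]

lemma one_sub_exp_neg_rpow_pos {v : ℝ} (hv : 0 < v) (β : ℝ) : 0 < 1 - rexp (-v ^ β) :=
  sub_pos.2 (exp_lt_one_iff.2 (neg_lt_zero.2 (rpow_pos_of_pos hv β)))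

lemma integrableOn_one_sub_exp_neg_rpow {β : ℝ} (hβ : β < -1) :
    IntegrableOn (fun v : ℝ => 1 - rexp (-v ^ β)) (Ioi 0) := by
  have hm : Measurable fun v : ℝ => 1 - rexp (-v ^ β) := by fun_prop
  rw [← Ioc_union_Ioi_eq_Ioi zero_le_one]
  refine IntegrableOn.union ?_ ?_
  · refine Measure.integrableOn_of_bounded (M := 1) (by simp) hm.aestronglyMeasurable ?_
    filter_upwards [ae_restrict_mem measurableSet_Ioc] with v hv
    rw [Real.norm_of_nonneg (one_sub_exp_neg_rpow_pos hv.1 β).le]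
    linarith [exp_pos (-v ^ β)]
  · refine Integrable.mono' (integrableOn_Ioi_rpow_of_lt hβ zero_lt_one) hm.aestronglyMeasurable ?_
    filter_upwards [ae_restrict_mem measurableSet_Ioi] with v hv
    rw [Real.norm_of_nonneg (one_sub_exp_neg_rpow_pos (zero_lt_one.trans hv) β).le]
    linarith [add_one_le_exp (-v ^ β)]

lemma integral_one_sub_exp_neg_rpow_pos {β : ℝ} (hβ : β < -1) :
    0 < ∫ v in Ioi (0 : ℝ), (1 - rexp (-v ^ β)) := by
  have hsupp : Ioi (0 : ℝ) ⊆ Function.support fun v => 1 - rexp (-v ^ β) := fun v hv =>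
    (one_sub_exp_neg_rpow_pos hv β).ne'
  rw [setIntegral_pos_iff_support_of_nonneg_ae (ae_restrict_of_forall_mem measurableSet_Ioi
    fun _ hv => (one_sub_exp_neg_rpow_pos hv β).le) (integrableOn_one_sub_exp_neg_rpow hβ),
    inter_eq_right.2 hsupp, Real.volume_Ioi]
  exact ENNReal.zero_lt_top

lemma one_sub_paretoLaplace {α l : ℝ} (hα : 0 < α) (hl : 0 < l) :
    1 - paretoLaplace α l = l ^ α * ∫ v in (0 : ℝ)..(l ^ (-α)), (1 - rexp (-v ^ (-α⁻¹))) := by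
  have hlα : 0 < l ^ (-α) := rpow_pos_of_pos hl _
  have hint : IntervalIntegrable (fun u : ℝ => rexp (-(l * u ^ (-α⁻¹)))) volume 0 1 := by
    rw [intervalIntegrable_iff_integrableOn_Ioc_of_le zero_le_one]
    refine Measure.integrableOn_of_bounded (M := 1) (by simp)
      (Measurable.aestronglyMeasurable (by fun_prop)) ?_
    filter_upwards [ae_restrict_mem measurableSet_Ioc] with u hu
    rw [Real.norm_of_nonneg (exp_pos _).le]
    exact exp_le_one_iff.2 (neg_nonpos.2 (mul_nonneg hl.le (rpow_nonneg hu.1.le _)))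
  have hsubst : ∀ u ∈ uIcc (0 : ℝ) 1,
      1 - rexp (-(l ^ (-α) * u) ^ (-α⁻¹)) = 1 - rexp (-(l * u ^ (-α⁻¹))) := fun u hu => by
    rw [uIcc_of_le zero_le_one] at hu
    rw [mul_rpow hlα.le hu.1, ← rpow_mul hl.le, neg_mul_neg, mul_inv_cancel₀ hα.ne', rpow_one]
  calc 1 - paretoLaplace α l = ∫ u in (0 : ℝ)..1, (1 - rexp (-(l * u ^ (-α⁻¹)))) := by
        simp [intervalIntegral.integral_sub _ hint, paretoLaplace]
    _ = ∫ u in (0 : ℝ)..1, (1 - rexp (-(l ^ (-α) * u) ^ (-α⁻¹))) :=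
        (intervalIntegral.integral_congr hsubst).symm
    _ = l ^ α * ∫ v in (0 : ℝ)..(l ^ (-α)), (1 - rexp (-v ^ (-α⁻¹))) := by
        rw [intervalIntegral.integral_comp_mul_left (fun v => 1 - rexp (-v ^ (-α⁻¹))) hlα.ne',
          mul_zero, mul_one, rpow_neg hl.le, inv_inv, smul_eq_mul]

lemma tendsto_one_sub_paretoLaplace_div {α : ℝ} (hα0 : 0 < α) (hα1 : α < 1) :
    Tendsto (fun l => (1 - paretoLaplace α l) / l ^ α) (𝓝[>] 0)
      (𝓝 (∫ v in Ioi (0 : ℝ), (1 - rexp (-v ^ (-α⁻¹))))) := by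
  have hβ : -α⁻¹ < -1 := neg_lt_neg ((one_lt_inv₀ hα0).2 hα1)
  refine (intervalIntegral_tendsto_integral_Ioi 0 (integrableOn_one_sub_exp_neg_rpow hβ)
    (tendsto_rpow_neg_nhdsGT_zero (neg_lt_zero.2 hα0))).congr'
    (eventually_mem_nhdsWithin.mono fun l hl => ?_)
  beta_reduce
  rw [one_sub_paretoLaplace hα0 hl, mul_div_cancel_left₀ _ (rpow_pos_of_pos hl α).ne']

lemma isMomentFunction_exp_neg_rpow {α : ℝ} (hα0 : 0 < α) (hα1 : α < 1) :
    IsMomentFunction fun t => rexp (-t ^ α) :=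
  (isMomentFunction_paretoLaplace α).exp_neg_rpow_of_tendsto hα0
    (integral_one_sub_exp_neg_rpow_pos (neg_lt_neg ((one_lt_inv₀ hα0).2 hα1)))
    (tendsto_one_sub_paretoLaplace_div hα0 hα1)

/-- A probability measure `μ` on `(0, ∞)` with Laplace transform `exp (-t ^ α)`: the law at time one
of the `α`-stable subordinator. -/
structure IsStableLaw (α : ℝ) (μ : Measure ℝ) : Prop where
  ae_pos : ∀ᵐ s ∂μ, 0 < s
  integral_exp_neg_mul : ∀ t, 0 ≤ t → ∫ s, rexp (-(t * s)) ∂μ = rexp (-t ^ α)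

lemma exists_isStableLaw {α : ℝ} (hα0 : 0 < α) (hα1 : α < 1) :
    ∃ μ : Measure ℝ, IsProbabilityMeasure μ ∧ IsStableLaw α μ := by
  have h0 : Tendsto (fun t : ℝ => rexp (-t ^ α)) (𝓝[>] 0) (𝓝 1) := by
    have hc : Continuous fun t : ℝ => rexp (-t ^ α) :=
      (continuous_id.rpow_const fun _ => Or.inr hα0.le).neg.rexp
    simpa [zero_rpow hα0.ne'] using (hc.tendsto 0).mono_left nhdsWithin_le_nhds
  obtain ⟨μ, hμ, hpos, hlaplace⟩ :=
    (isMomentFunction_exp_neg_rpow hα0 hα1).exists_isProbabilityMeasure_integral_exp_neg_mul h0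
      (tendsto_exp_neg_atTop_nhds_zero.comp (tendsto_rpow_atTop hα0))
  refine ⟨μ, hμ, hpos, fun t ht => ?_⟩
  rcases ht.eq_or_lt with rfl | ht
  · simp [zero_rpow hα0.ne']
  · exact hlaplace t ht

lemma div_one_add_le_one_sub_exp_neg {v : ℝ} (hv : 0 ≤ v) : v / (1 + v) ≤ 1 - rexp (-v) := by
  have hexp : rexp (-v) ≤ (1 + v)⁻¹ := by
    rw [exp_neg]
    exact inv_anti₀ (by positivity) (by linarith [add_one_le_exp v])
  have hinv : (1 + v)⁻¹ = 1 - v / (1 + v) := by field_simp; ring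
  linarith

lemma half_le_one_sub_exp_neg {v : ℝ} (hv0 : 0 ≤ v) (hv1 : v ≤ 1) : v / 2 ≤ 1 - rexp (-v) := by
  refine le_trans ?_ (div_one_add_le_one_sub_exp_neg hv0)
  gcongr
  linarith

-- For `u = s / r` and `s ∼ μ`, the two outer terms have expectation at most
-- `2 * (ε ^ (1 - α) + ε ^ α) * r ^ (-α)`, so that for small `ε` the annulus must carry mass.
lemma one_sub_exp_neg_le_annulus {ε u : ℝ} (hε : 0 < ε) (hu : 0 < u) :
    1 - rexp (-u) ≤ 2 * ε * (1 - rexp (-(u / ε))) + (Icc ε ε⁻¹).indicator 1 u +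
      2 * (1 - rexp (-(ε * u))) := by
  have hind : 0 ≤ (Icc ε ε⁻¹).indicator (1 : ℝ → ℝ) u := indicator_nonneg (fun _ _ => zero_le_one) u
  have hleft : 0 ≤ 2 * ε * (1 - rexp (-(u / ε))) :=
    mul_nonneg (by positivity) (sub_nonneg.2 (exp_le_one_iff.2 (neg_nonpos.2 (by positivity))))
  have hright : 0 ≤ 1 - rexp (-(ε * u)) :=
    sub_nonneg.2 (exp_le_one_iff.2 (neg_nonpos.2 (by positivity)))
  rcases lt_or_ge u ε with h | h
  · have hle : u ≤ 2 * ε * (1 - rexp (-(u / ε))) := calc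
      u = 2 * ε * (u / ε / 2) := by field_simp
      _ ≤ 2 * ε * (1 - rexp (-(u / ε))) := by
        gcongr
        exact half_le_one_sub_exp_neg (by positivity) ((div_le_one hε).2 h.le)
    linarith [one_sub_le_exp_neg u]
  rcases le_or_gt u ε⁻¹ with h' | h'
  · rw [indicator_of_mem (mem_Icc.2 ⟨h, h'⟩), Pi.one_apply]
    linarith [exp_pos (-u)]
  · have hεu : 1 ≤ ε * u := ((inv_lt_iff_one_lt_mul₀' hε).1 h').le
    have : rexp (-(ε * u)) ≤ rexp (-1) := exp_le_exp.2 (neg_le_neg hεu)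
    linarith [half_le_one_sub_exp_neg zero_le_one le_rfl, exp_pos (-u)]

namespace IsStableLaw

variable {μ : Measure ℝ} [IsProbabilityMeasure μ] {α : ℝ}

lemma integrable_exp_neg_mul (h : IsStableLaw α μ) {t : ℝ} (ht : 0 ≤ t) :
    Integrable (fun s => rexp (-(t * s))) μ := by
  refine Integrable.of_bound (by fun_prop) 1 (h.ae_pos.mono fun s hs => ?_)
  rw [Real.norm_of_nonneg (exp_pos _).le]
  exact exp_le_one_iff.2 (neg_nonpos.2 (mul_nonneg ht hs.le))

lemma integrable_one_sub_exp_neg_mul (h : IsStableLaw α μ) {t : ℝ} (ht : 0 ≤ t) :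
    Integrable (fun s => 1 - rexp (-(t * s))) μ :=
  (integrable_const 1).sub (h.integrable_exp_neg_mul ht)

lemma integral_one_sub_exp_neg_mul (h : IsStableLaw α μ) {t : ℝ} (ht : 0 ≤ t) :
    ∫ s, (1 - rexp (-(t * s))) ∂μ = 1 - rexp (-t ^ α) := by
  rw [integral_sub (integrable_const 1) (h.integrable_exp_neg_mul ht), h.integral_exp_neg_mul t ht]
  simp

lemma integral_one_sub_exp_neg_mul_le (h : IsStableLaw α μ) {t : ℝ} (ht : 0 ≤ t) :
    ∫ s, (1 - rexp (-(t * s))) ∂μ ≤ t ^ α := by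
  rw [h.integral_one_sub_exp_neg_mul ht]
  linarith [one_sub_le_exp_neg (t ^ α)]

-- `Γ(m) * s ^ (-m) = ∫ t ^ (m - 1) * exp (-t * s) dt`, and the Laplace transform decays.
lemma integrable_rpow_neg (h : IsStableLaw α μ) (hα : 0 < α) {m : ℝ} (hm : 0 ≤ m) :
    Integrable (fun s => s ^ (-m)) μ := by
  rcases hm.eq_or_lt with rfl | hm
  · simp
  have hprod : Integrable (fun p : ℝ × ℝ => p.1 ^ (m - 1) * rexp (-(p.1 * p.2)))
      ((volume.restrict (Ioi 0)).prod μ) := by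
    rw [integrable_prod_iff (by fun_prop)]
    refine ⟨ae_restrict_of_forall_mem measurableSet_Ioi fun t ht =>
      (h.integrable_exp_neg_mul (le_of_lt ht)).const_mul (t ^ (m - 1)), ?_⟩
    refine (integrableOn_rpow_mul_exp_neg_rpow (s := m - 1) (by linarith) hα).congr_fun
      (fun t ht => ?_) measurableSet_Ioi
    simp only [norm_mul, Real.norm_of_nonneg (exp_pos _).le,
      Real.norm_of_nonneg (rpow_nonneg (le_of_lt ht) _), integral_const_mul,
      h.integral_exp_neg_mul t (le_of_lt ht)]
  refine (hprod.integral_prod_right.const_mul (Real.Gamma m)⁻¹).congr (h.ae_pos.mono fun s hs => ?_)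
  have hgamma := Real.integral_rpow_mul_exp_neg_mul_Ioi hm hs
  simp only [mul_comm s] at hgamma
  beta_reduce
  rw [hgamma, one_div, inv_rpow hs.le, rpow_neg hs.le, mul_comm,
    mul_inv_cancel_right₀ (Real.Gamma_pos_of_pos hm).ne']

lemma one_sub_exp_neg_rpow_le_annulus (h : IsStableLaw α μ) {ε r : ℝ} (hε : 0 < ε) (hr : 0 < r) :
    1 - rexp (-r ^ (-α)) ≤
      μ.real (Icc (ε * r) (ε⁻¹ * r)) + (2 * ε ^ (1 - α) + 2 * ε ^ α) * r ^ (-α) := by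
  have hpow : ∀ a : ℝ, 0 < a → (a * r⁻¹) ^ α = a ^ α * r ^ (-α) := fun a ha => by
    rw [mul_rpow ha.le (inv_nonneg.2 hr.le), inv_rpow hr.le, rpow_neg hr.le]
  have hnear : 0 ≤ ε⁻¹ * r⁻¹ := by positivity
  have hfar : 0 ≤ ε * r⁻¹ := by positivity
  have hInear := (h.integrable_one_sub_exp_neg_mul hnear).const_mul (2 * ε)
  have hIfar := (h.integrable_one_sub_exp_neg_mul hfar).const_mul 2
  have hIind : Integrable ((Icc (ε * r) (ε⁻¹ * r)).indicator (1 : ℝ → ℝ)) μ :=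
    (integrable_const 1).indicator measurableSet_Icc
  have hIsum : Integrable (fun s => 2 * ε * (1 - rexp (-(ε⁻¹ * r⁻¹ * s))) +
      (Icc (ε * r) (ε⁻¹ * r)).indicator (1 : ℝ → ℝ) s) μ := hInear.add hIind
  calc 1 - rexp (-r ^ (-α)) = ∫ s, (1 - rexp (-(r⁻¹ * s))) ∂μ := by
        rw [h.integral_one_sub_exp_neg_mul (by positivity), inv_rpow hr.le, rpow_neg hr.le]
    _ ≤ ∫ s, (2 * ε * (1 - rexp (-(ε⁻¹ * r⁻¹ * s))) +
          (Icc (ε * r) (ε⁻¹ * r)).indicator (1 : ℝ → ℝ) s +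
          2 * (1 - rexp (-(ε * r⁻¹ * s)))) ∂μ := by
        refine integral_mono_ae (h.integrable_one_sub_exp_neg_mul (by positivity))
          (hIsum.add hIfar) (h.ae_pos.mono fun s hs => ?_)
        have hpoint := one_sub_exp_neg_le_annulus hε (u := r⁻¹ * s) (by positivity)
        have hmem : r⁻¹ * s ∈ Icc ε ε⁻¹ ↔ s ∈ Icc (ε * r) (ε⁻¹ * r) := by
          rw [inv_mul_eq_div, mem_Icc, mem_Icc, le_div_iff₀ hr, div_le_iff₀ hr]
        simpa only [indicator_apply, hmem, mul_assoc, div_eq_inv_mul, Pi.one_apply] using hpoint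
    _ = 2 * ε * ∫ s, (1 - rexp (-(ε⁻¹ * r⁻¹ * s))) ∂μ + μ.real (Icc (ε * r) (ε⁻¹ * r)) +
          2 * ∫ s, (1 - rexp (-(ε * r⁻¹ * s))) ∂μ := by
        rw [integral_add hIsum hIfar, integral_add hInear hIind,
          integral_indicator_one measurableSet_Icc, integral_const_mul, integral_const_mul]
    _ ≤ 2 * ε * (ε⁻¹ * r⁻¹) ^ α + μ.real (Icc (ε * r) (ε⁻¹ * r)) + 2 * (ε * r⁻¹) ^ α := by
        gcongr
        · exact h.integral_one_sub_exp_neg_mul_le hnear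
        · exact h.integral_one_sub_exp_neg_mul_le hfar
    _ = μ.real (Icc (ε * r) (ε⁻¹ * r)) + (2 * ε ^ (1 - α) + 2 * ε ^ α) * r ^ (-α) := by
        rw [hpow _ (inv_pos.2 hε), hpow _ hε, inv_rpow hε.le, rpow_sub hε, rpow_one]
        ring

lemma exists_rpow_neg_le_measureReal_Icc (h : IsStableLaw α μ) (hα0 : 0 < α) (hα1 : α < 1) :
    ∃ ε > 0, ∀ r, 1 ≤ r → r ^ (-α) ≤ 4 * μ.real (Icc (ε * r) (ε⁻¹ * r)) := by
  have hsmall : ∀ᶠ ε : ℝ in 𝓝[>] 0, 2 * ε ^ (1 - α) + 2 * ε ^ α < 1 / 4 := by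
    have htendsto : ∀ β : ℝ, 0 < β → Tendsto (fun ε : ℝ => 2 * ε ^ β) (𝓝[>] 0) (𝓝 0) :=
      fun β hβ => by
        have hlim := ((continuousAt_rpow_const 0 β (Or.inr hβ.le)).tendsto.const_mul 2).mono_left
          (nhdsWithin_le_nhds (s := Ioi 0))
        rwa [zero_rpow hβ.ne', mul_zero] at hlim
    have hsum := (htendsto (1 - α) (sub_pos.2 hα1)).add (htendsto α hα0)
    rw [add_zero] at hsum
    exact hsum.eventually_lt_const (by norm_num)
  obtain ⟨ε, hsmall, hε⟩ := (hsmall.and eventually_mem_nhdsWithin).exists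
  refine ⟨ε, hε, fun r hr => ?_⟩
  have hr0 : 0 < r := zero_lt_one.trans_le hr
  have hρ0 : 0 ≤ r ^ (-α) := rpow_nonneg hr0.le _
  have hlower := half_le_one_sub_exp_neg hρ0
    (rpow_le_one_of_one_le_of_nonpos hr (neg_nonpos.2 hα0.le))
  have hupper := h.one_sub_exp_neg_rpow_le_annulus hε hr0
  linarith [mul_le_mul_of_nonneg_right hsmall.le hρ0]

end IsStableLaw

/-! ### Gaussian mixtures -/

/-- The mixture `∫ s ^ (-m) * exp (-r / (4 * s)) dμ(s)`. For `m = d / 2` and `r = ‖w‖ ^ 2` it is, up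
to the constant `(4 * π) ^ (-d / 2)`, the average over `s ∼ μ` of the classical heat kernel on `ℝ^d`
at time `s`; differentiation in `r` raises `m` by one. -/
def gaussianMixture (μ : Measure ℝ) (m r : ℝ) : ℝ :=
  ∫ s, s ^ (-m) * rexp (-(r / (4 * s))) ∂μ

lemma exists_rpow_le_mul_exp (p : ℝ) {c : ℝ} (hc : 0 < c) :
    ∃ C > 0, ∀ y : ℝ, 1 ≤ y → y ^ p ≤ C * rexp (c * y) := by
  obtain ⟨k, hk⟩ := exists_nat_ge p
  refine ⟨k.factorial / c ^ k, by positivity, fun y hy => ?_⟩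
  calc y ^ p ≤ y ^ k := by
        rw [← rpow_natCast]
        exact rpow_le_rpow_of_exponent_le hy hk
    _ = k.factorial / c ^ k * ((c * y) ^ k / k.factorial) := by
        rw [mul_pow]
        field_simp
    _ ≤ k.factorial / c ^ k * rexp (c * y) := by
        gcongr
        exact pow_div_factorial_le_exp _ (by positivity) k

lemma exists_rpow_mul_exp_neg_le {m : ℝ} (hm : 0 ≤ m) :
    ∃ C > 0, ∀ x : ℝ, 0 < x → x ^ m * rexp (-(x / 4)) ≤ C * (1 - rexp (-x⁻¹)) := by
  obtain ⟨C, hC, hexp⟩ := exists_rpow_le_mul_exp (m + 1) (c := 1 / 4) (by norm_num)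
  refine ⟨C * rexp (1 / 4), by positivity, fun x hx => ?_⟩
  calc x ^ m * rexp (-(x / 4)) ≤ (1 + x) ^ m * rexp (-(x / 4)) := by
        gcongr
        linarith
    _ = (1 + x) ^ (m + 1) * rexp (-(x / 4)) * (x⁻¹ / (1 + x⁻¹)) := by
        rw [rpow_add_one (by positivity)]
        field_simp
        ring
    _ ≤ C * rexp (1 / 4 * (1 + x)) * rexp (-(x / 4)) * (1 - rexp (-x⁻¹)) := by
        gcongr
        · exact hexp _ (by linarith)
        · exact div_one_add_le_one_sub_exp_neg (by positivity)
    _ = C * rexp (1 / 4) * (1 - rexp (-x⁻¹)) := by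
        rw [mul_assoc C, ← exp_add]
        ring_nf

lemma hasFDerivAt_rpow_mul_exp_neg_norm_sq_div {E : Type*} [NormedAddCommGroup E]
    [InnerProductSpace ℝ E] {s : ℝ} (hs : 0 < s) (m : ℝ) (v : E) :
    HasFDerivAt (fun v : E => s ^ (-m) * rexp (-(‖v‖ ^ 2 / (4 * s))))
      ((-(1 / 2) * (s ^ (-(m + 1)) * rexp (-(‖v‖ ^ 2 / (4 * s))))) • innerSL ℝ v) v := by
  have hsq : HasFDerivAt (fun v : E => ‖v‖ ^ 2) (2 • innerSL ℝ v) v :=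
    (hasStrictFDerivAt_norm_sq v).hasFDerivAt
  have hexp : HasDerivAt (fun r : ℝ => s ^ (-m) * rexp (-(r / (4 * s))))
      (s ^ (-m) * (rexp (-(‖v‖ ^ 2 / (4 * s))) * -(1 / (4 * s)))) (‖v‖ ^ 2) :=
    ((hasDerivAt_id _).div_const _).neg.exp.const_mul _
  refine (hexp.comp_hasFDerivAt v hsq).congr_fderiv ?_
  rw [← Nat.cast_smul_eq_nsmul ℝ, smul_smul]
  congr 1
  rw [neg_add, rpow_add hs, rpow_neg_one]
  field_simp
  norm_num

lemma exp_neg_div_le_one {r s : ℝ} (hr : 0 ≤ r) (hs : 0 < s) : rexp (-(r / (4 * s))) ≤ 1 :=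
  exp_le_one_iff.2 (neg_nonpos.2 (by positivity))

namespace IsStableLaw

variable {μ : Measure ℝ} [IsProbabilityMeasure μ] {α m : ℝ}

lemma integrable_gaussianMixture (h : IsStableLaw α μ) (hα : 0 < α) (hm : 0 ≤ m) {r : ℝ}
    (hr : 0 ≤ r) : Integrable (fun s => s ^ (-m) * rexp (-(r / (4 * s)))) μ := by
  refine (h.integrable_rpow_neg hα hm).mono' (by fun_prop) (h.ae_pos.mono fun s hs => ?_)
  rw [Real.norm_of_nonneg (by positivity)]
  exact mul_le_of_le_one_right (rpow_nonneg hs.le _) (exp_neg_div_le_one hr hs)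

lemma gaussianMixture_pos (h : IsStableLaw α μ) (hα : 0 < α) (hm : 0 ≤ m) {r : ℝ} (hr : 0 ≤ r) :
    0 < gaussianMixture μ m r := by
  have hpos : ∀ᵐ s ∂μ, 0 < s ^ (-m) * rexp (-(r / (4 * s))) :=
    h.ae_pos.mono fun s hs => by positivity
  have hsupp : (Function.support fun s => s ^ (-m) * rexp (-(r / (4 * s)))) =ᵐ[μ] univ :=
    eventuallyEq_univ.2 (hpos.mono fun s hs => hs.ne')
  refine (integral_pos_iff_support_of_nonneg_ae (hpos.mono fun s hs => hs.le)
    (h.integrable_gaussianMixture hα hm hr)).2 ?_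
  rw [measure_congr hsupp, measure_univ]
  exact zero_lt_one

lemma antitoneOn_gaussianMixture (h : IsStableLaw α μ) (hα : 0 < α) (hm : 0 ≤ m) :
    AntitoneOn (gaussianMixture μ m) (Ici 0) := by
  intro r hr r' hr' hle
  refine integral_mono_ae (h.integrable_gaussianMixture hα hm hr')
    (h.integrable_gaussianMixture hα hm hr) (h.ae_pos.mono fun s hs => ?_)
  beta_reduce
  gcongr

lemma isBigO_rpow_mul_gaussianMixture (h : IsStableLaw α μ) (hα : 0 < α) (hm : 0 ≤ m) :
    (fun r => r ^ m * gaussianMixture μ m r) =O[𝓟 (Ici 1)] fun r => r ^ (-α) := by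
  obtain ⟨C, hC, hpoint⟩ := exists_rpow_mul_exp_neg_le hm
  refine isBigO_principal.2 ⟨C, fun r hr => ?_⟩
  have hr : 0 < r := zero_lt_one.trans_le hr
  have hr' : 0 ≤ r⁻¹ := by positivity
  rw [Real.norm_of_nonneg (mul_nonneg (by positivity) (h.gaussianMixture_pos hα hm hr.le).le),
    Real.norm_of_nonneg (rpow_nonneg hr.le _)]
  calc r ^ m * gaussianMixture μ m r = ∫ s, r ^ m * (s ^ (-m) * rexp (-(r / (4 * s)))) ∂μ :=
        (integral_const_mul _ _).symm
    _ ≤ ∫ s, C * (1 - rexp (-(r⁻¹ * s))) ∂μ := by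
        refine integral_mono_ae ((h.integrable_gaussianMixture hα hm hr.le).const_mul _)
          ((h.integrable_one_sub_exp_neg_mul hr').const_mul _) (h.ae_pos.mono fun s hs => ?_)
        have hpoint := hpoint (r / s) (by positivity)
        rwa [div_rpow hr.le hs.le, inv_div, div_div, mul_comm s 4, div_eq_mul_inv, ← rpow_neg hs.le,
          mul_assoc, div_eq_inv_mul s] at hpoint
    _ ≤ C * r⁻¹ ^ α := by
        rw [integral_const_mul]
        gcongr
        exact h.integral_one_sub_exp_neg_mul_le hr'
    _ = C * r ^ (-α) := by rw [inv_rpow hr.le, rpow_neg hr.le]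

lemma isBigO_rpow_neg_gaussianMixture (h : IsStableLaw α μ) (hα0 : 0 < α) (hα1 : α < 1)
    (hm : 0 ≤ m) :
    (fun r => r ^ (-α)) =O[𝓟 (Ici 1)] fun r => r ^ m * gaussianMixture μ m r := by
  obtain ⟨ε, hε, hannulus⟩ := h.exists_rpow_neg_le_measureReal_Icc hα0 hα1
  refine isBigO_principal.2 ⟨4 * (ε ^ (-m) * rexp (ε⁻¹ / 4)), fun r hr => ?_⟩
  have hr0 : 0 < r := zero_lt_one.trans_le hr
  have hint := h.integrable_gaussianMixture hα0 hm hr0.le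
  have hlower : (ε⁻¹ * r) ^ (-m) * rexp (-(ε⁻¹ / 4)) * μ.real (Icc (ε * r) (ε⁻¹ * r)) ≤
      gaussianMixture μ m r := by
    refine (setIntegral_ge_of_const_le_real measurableSet_Icc (measure_ne_top _ _) (fun s hs => ?_)
      hint.integrableOn).trans (setIntegral_le_integral hint
        (h.ae_pos.mono fun s hs => mul_nonneg (rpow_nonneg hs.le _) (exp_pos _).le))
    have hs0 : 0 < s := (mul_pos hε hr0).trans_le hs.1
    have hquot : r / (4 * s) ≤ ε⁻¹ / 4 := by
      rw [div_le_div_iff₀ (by positivity) (by norm_num), inv_mul_eq_div, le_div_iff₀ hε]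
      linarith [hs.1]
    exact mul_le_mul (rpow_le_rpow_of_nonpos hs0 hs.2 (neg_nonpos.2 hm))
      (exp_le_exp.2 (neg_le_neg hquot)) (exp_pos _).le (rpow_nonneg hs0.le _)
  rw [Real.norm_of_nonneg (rpow_nonneg hr0.le _),
    Real.norm_of_nonneg (mul_nonneg (by positivity) (h.gaussianMixture_pos hα0 hm hr0.le).le)]
  calc r ^ (-α) ≤ 4 * μ.real (Icc (ε * r) (ε⁻¹ * r)) := hannulus r hr
    _ = 4 * (ε ^ (-m) * rexp (ε⁻¹ / 4)) * (r ^ m *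
          ((ε⁻¹ * r) ^ (-m) * rexp (-(ε⁻¹ / 4)) * μ.real (Icc (ε * r) (ε⁻¹ * r)))) := by
        rw [mul_rpow (by positivity) hr0.le, inv_rpow hε.le, rpow_neg hr0.le, exp_neg]
        field_simp
    _ ≤ 4 * (ε ^ (-m) * rexp (ε⁻¹ / 4)) * (r ^ m * gaussianMixture μ m r) := by gcongr

lemma isBigO_rpow_mul_gaussianMixture_add_Icc (h : IsStableLaw α μ) (hα : 0 < α) (hm : 0 ≤ m)
    {j k : ℝ} (hj : 0 ≤ m + j) (hk : 0 ≤ k) :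
    (fun r => r ^ k * gaussianMixture μ (m + j) r) =O[𝓟 (Icc 0 1)] gaussianMixture μ m := by
  have hpos : ∀ {r : ℝ}, 0 ≤ r → 0 < gaussianMixture μ m r := h.gaussianMixture_pos hα hm
  have hpos' : ∀ {r : ℝ}, 0 ≤ r → 0 < gaussianMixture μ (m + j) r := h.gaussianMixture_pos hα hj
  refine isBigO_principal.2 ⟨gaussianMixture μ (m + j) 0 / gaussianMixture μ m 1, fun r hr => ?_⟩
  rw [Real.norm_of_nonneg (mul_nonneg (rpow_nonneg hr.1 k) (hpos' hr.1).le),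
    Real.norm_of_nonneg (hpos hr.1).le]
  calc r ^ k * gaussianMixture μ (m + j) r ≤ 1 * gaussianMixture μ (m + j) 0 := by
        gcongr
        · exact (hpos' hr.1).le
        · exact rpow_le_one hr.1 hr.2 hk
        · exact h.antitoneOn_gaussianMixture hα hj self_mem_Ici hr.1 hr.1
    _ = gaussianMixture μ (m + j) 0 / gaussianMixture μ m 1 * gaussianMixture μ m 1 := by
        rw [one_mul, div_mul_cancel₀ _ (hpos zero_le_one).ne']
    _ ≤ gaussianMixture μ (m + j) 0 / gaussianMixture μ m 1 * gaussianMixture μ m r :=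
        mul_le_mul_of_nonneg_left
          (h.antitoneOn_gaussianMixture hα hm hr.1 (mem_Ici.2 zero_le_one) hr.2)
          (div_pos (hpos' le_rfl) (hpos zero_le_one)).le

lemma isBigO_rpow_mul_gaussianMixture_add_Ici_one (h : IsStableLaw α μ) (hα0 : 0 < α) (hα1 : α < 1)
    (hm : 0 ≤ m) {j k : ℝ} (hj : 0 ≤ m + j) (hkj : k ≤ j) :
    (fun r => r ^ k * gaussianMixture μ (m + j) r) =O[𝓟 (Ici 1)] gaussianMixture μ m := by
  have hrpow : (fun r : ℝ => r ^ (k - j - m)) =O[𝓟 (Ici 1)] fun r => r ^ (-m) :=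
    isBigO_principal.2 ⟨1, fun r hr => by
      have hr0 : (0 : ℝ) ≤ r := zero_le_one.trans hr
      rw [one_mul, Real.norm_of_nonneg (rpow_nonneg hr0 _), Real.norm_of_nonneg (rpow_nonneg hr0 _)]
      exact rpow_le_rpow_of_exponent_le hr (by linarith)⟩
  refine (hrpow.mul ((h.isBigO_rpow_mul_gaussianMixture hα0 hj).trans
    (h.isBigO_rpow_neg_gaussianMixture hα0 hα1 hm))).congr' ?_ ?_
  · filter_upwards [mem_principal_self (Ici (1 : ℝ))] with r hr
    rw [← mul_assoc, ← rpow_add (zero_lt_one.trans_le hr), sub_sub, add_comm j, sub_add_cancel]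
  · filter_upwards [mem_principal_self (Ici (1 : ℝ))] with r hr
    rw [← mul_assoc, ← rpow_add (zero_lt_one.trans_le hr), neg_add_cancel, rpow_zero, one_mul]

lemma isBigO_rpow_mul_gaussianMixture_add (h : IsStableLaw α μ) (hα0 : 0 < α) (hα1 : α < 1)
    (hm : 0 ≤ m) {j k : ℝ} (hk : 0 ≤ k) (hkj : k ≤ j) :
    (fun r => r ^ k * gaussianMixture μ (m + j) r) =O[𝓟 (Ici 0)] gaussianMixture μ m := by
  have hj : 0 ≤ m + j := by linarith
  rw [← Icc_union_Ici_eq_Ici zero_le_one, ← sup_principal]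
  exact (h.isBigO_rpow_mul_gaussianMixture_add_Icc hα0 hm hj hk).sup
    (h.isBigO_rpow_mul_gaussianMixture_add_Ici_one hα0 hα1 hm hj hkj)

lemma isBigO_norm_pow_mul_gaussianMixture {E : Type*} [NormedAddCommGroup E] (h : IsStableLaw α μ)
    (hα0 : 0 < α) (hα1 : α < 1) (hm : 0 ≤ m) {j : ℝ} {k : ℕ} (hkj : k ≤ 2 * j) :
    (fun w : E => ‖w‖ ^ k * gaussianMixture μ (m + j) (‖w‖ ^ 2)) =O[⊤]
      fun w => gaussianMixture μ m (‖w‖ ^ 2) := by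
  have hsq : Tendsto (fun w : E => ‖w‖ ^ 2) ⊤ (𝓟 (Ici 0)) :=
    tendsto_principal.2 (Eventually.of_forall fun w => sq_nonneg ‖w‖)
  refine ((h.isBigO_rpow_mul_gaussianMixture_add hα0 hα1 hm (k := k / 2) (j := j) (by positivity)
    (by linarith)).comp_tendsto hsq).congr_left fun w => ?_
  rw [Function.comp_apply, ← rpow_natCast ‖w‖ 2, ← rpow_mul (norm_nonneg w), Nat.cast_ofNat,
    mul_div_cancel₀ _ two_ne_zero, rpow_natCast]

lemma hasFDerivAt_gaussianMixture {E : Type*} [NormedAddCommGroup E] [InnerProductSpace ℝ E]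
    (h : IsStableLaw α μ) (hα : 0 < α) (hm : 0 ≤ m) (w : E) :
    HasFDerivAt (fun w : E => gaussianMixture μ m (‖w‖ ^ 2))
      ((-(1 / 2) * gaussianMixture μ (m + 1) (‖w‖ ^ 2)) • innerSL ℝ w) w := by
  let F' : E → ℝ → E →L[ℝ] ℝ := fun v s =>
    (-(1 / 2) * (s ^ (-(m + 1)) * rexp (-(‖v‖ ^ 2 / (4 * s))))) • innerSL ℝ v
  have hbound : ∀ᵐ s ∂μ, ∀ v ∈ ball w 1, ‖F' v s‖ ≤ s ^ (-(m + 1)) * (‖w‖ + 1) := by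
    filter_upwards [h.ae_pos] with s hs v hv
    have hv : ‖v‖ ≤ ‖w‖ + 1 := by
      linarith [norm_sub_norm_le v w, mem_ball_iff_norm.1 hv]
    rw [norm_smul, innerSL_apply_norm, norm_mul,
      Real.norm_of_nonneg (r := s ^ (-(m + 1)) * _) (by positivity)]
    calc _ ≤ 1 * (s ^ (-(m + 1)) * 1) * (‖w‖ + 1) := by
          gcongr
          · norm_num
          · exact exp_neg_div_le_one (sq_nonneg ‖v‖) hs
      _ = s ^ (-(m + 1)) * (‖w‖ + 1) := by ring
  refine (hasFDerivAt_integral_of_dominated_of_fderiv_le (ball_mem_nhds w one_pos)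
    (Eventually.of_forall fun v => by fun_prop) (h.integrable_gaussianMixture hα hm (sq_nonneg _))
    (AEStronglyMeasurable.smul_const (by fun_prop) _) hbound
    ((h.integrable_rpow_neg hα (by positivity)).mul_const _) (h.ae_pos.mono fun s hs v _ =>
      hasFDerivAt_rpow_mul_exp_neg_norm_sq_div hs m v)).congr_fderiv ?_
  rw [integral_smul_const, integral_const_mul, gaussianMixture]

end IsStableLaw

/-! ### Domination of a function and its gradient -/

/-- `f` is differentiable, and `f` and its gradient are bounded by a multiple of `g` on the whole
space. -/
structure DominatedBy {E : Type*} [NormedAddCommGroup E] [NormedSpace ℝ E] (f g : E → ℝ) :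
    Prop where
  differentiable : Differentiable ℝ f
  isBigO : f =O[⊤] g
  isBigO_fderiv : fderiv ℝ f =O[⊤] g

namespace DominatedBy

variable {E F ι : Type*} [NormedAddCommGroup E] [NormedSpace ℝ E] [NormedAddCommGroup F]
  [NormedSpace ℝ F] {f f₁ f₂ g g₁ g₂ : E → ℝ}

lemma of_hasFDerivAt {f' : E → E →L[ℝ] ℝ} (h : ∀ x, HasFDerivAt f (f' x) x) (hf : f =O[⊤] g)
    (hf' : f' =O[⊤] g) : DominatedBy f g :=
  ⟨fun x => (h x).differentiableAt, hf, hf'.congr_left fun x => (h x).fderiv.symm⟩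

lemma const (c : ℝ) : DominatedBy (fun _ : E => c) fun _ => c :=
  of_hasFDerivAt (fun x => hasFDerivAt_const c x) (isBigO_refl _ _) (isBigO_zero _ _)

lemma trans_isBigO (h : DominatedBy f g₁) (hg : g₁ =O[⊤] g₂) : DominatedBy f g₂ :=
  ⟨h.differentiable, h.isBigO.trans hg, h.isBigO_fderiv.trans hg⟩

lemma add (h₁ : DominatedBy f₁ g) (h₂ : DominatedBy f₂ g) :
    DominatedBy (fun x => f₁ x + f₂ x) g :=
  of_hasFDerivAt (fun x => (h₁.differentiable x).hasFDerivAt.add (h₂.differentiable x).hasFDerivAt)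
    (h₁.isBigO.add h₂.isBigO) (h₁.isBigO_fderiv.add h₂.isBigO_fderiv)

lemma mul (h₁ : DominatedBy f₁ g₁) (h₂ : DominatedBy f₂ g₂) :
    DominatedBy (fun x => f₁ x * f₂ x) fun x => g₁ x * g₂ x :=
  of_hasFDerivAt (fun x => (h₁.differentiable x).hasFDerivAt.mul (h₂.differentiable x).hasFDerivAt)
    (h₁.isBigO.mul h₂.isBigO)
    ((h₁.isBigO.smul h₂.isBigO_fderiv).add
      ((h₂.isBigO.smul h₁.isBigO_fderiv).congr_right fun x => mul_comm (g₂ x) (g₁ x)))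

lemma const_mul (h : DominatedBy f g) (c : ℝ) : DominatedBy (fun x => c * f x) g :=
  ((const c).mul h).trans_isBigO (isBigO_const_mul_self c g ⊤)

lemma sum (s : Finset ι) {f : ι → E → ℝ} (h : ∀ i ∈ s, DominatedBy (f i) g) :
    DominatedBy (fun x => ∑ i ∈ s, f i x) g :=
  of_hasFDerivAt
    (fun x => HasFDerivAt.fun_sum fun i hi => ((h i hi).differentiable x).hasFDerivAt)
    (IsBigO.fun_sum fun i hi => (h i hi).isBigO)
    (IsBigO.fun_sum fun i hi => (h i hi).isBigO_fderiv)

lemma prod (s : Finset ι) {f g : ι → E → ℝ} (h : ∀ i, DominatedBy (f i) (g i)) :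
    DominatedBy (fun x => ∏ i ∈ s, f i x) fun x => ∏ i ∈ s, g i x := by
  classical
  induction s using Finset.induction_on with
  | empty => simpa only [Finset.prod_empty] using const 1
  | insert i s hi ih =>
    simp only [Finset.prod_insert hi]
    exact (h i).mul ih

lemma comp_continuousLinearMap {f g : F → ℝ} (h : DominatedBy f g) (L : E →L[ℝ] F) :
    DominatedBy (fun x => f (L x)) fun x => g (L x) := by
  have hcomp : (fun x => (fderiv ℝ f (L x)).comp L) =O[⊤] fun x => fderiv ℝ f (L x) :=
    IsBigO.of_bound ‖L‖ (Eventually.of_forall fun x => by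
      rw [mul_comm]
      exact ContinuousLinearMap.opNorm_comp_le _ _)
  exact of_hasFDerivAt (fun x => (h.differentiable (L x)).hasFDerivAt.comp x L.hasFDerivAt)
    (h.isBigO.comp_tendsto tendsto_top) (hcomp.trans (h.isBigO_fderiv.comp_tendsto tendsto_top))

end DominatedBy

section InnerProductSpace

variable {E : Type*} [NormedAddCommGroup E] [InnerProductSpace ℝ E] {μ : Measure ℝ}
  [IsProbabilityMeasure μ] {α m : ℝ}

lemma isBigO_smul_innerSL (a : E → ℝ) :
    (fun w => a w • innerSL ℝ w) =O[⊤] fun w => ‖w‖ * a w :=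
  isBigO_of_le _ fun w => by rw [norm_smul, innerSL_apply_norm, norm_mul, norm_norm, mul_comm]

lemma IsStableLaw.dominatedBy_gaussianMixture (h : IsStableLaw α μ) (hα0 : 0 < α) (hα1 : α < 1)
    (hm : 0 ≤ m) :
    DominatedBy (fun w : E => gaussianMixture μ m (‖w‖ ^ 2))
      fun w => gaussianMixture μ m (‖w‖ ^ 2) := by
  refine .of_hasFDerivAt (h.hasFDerivAt_gaussianMixture hα0 hm) (isBigO_refl _ _)
    ((isBigO_smul_innerSL _).trans ?_)
  refine ((h.isBigO_norm_pow_mul_gaussianMixture hα0 hα1 hm (j := 1) (k := 1)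
    (by norm_num)).const_mul_left (-(1 / 2))).congr_left fun w => ?_
  ring

lemma IsStableLaw.dominatedBy_norm_sq_mul_gaussianMixture (h : IsStableLaw α μ) (hα0 : 0 < α)
    (hα1 : α < 1) (hm : 0 ≤ m) :
    DominatedBy (fun w : E => ‖w‖ ^ 2 * gaussianMixture μ (m + 1) (‖w‖ ^ 2))
      fun w => gaussianMixture μ m (‖w‖ ^ 2) := by
  have hbig : ∀ {j : ℝ} {k : ℕ}, k ≤ 2 * j →
      (fun w : E => ‖w‖ ^ k * gaussianMixture μ (m + j) (‖w‖ ^ 2)) =O[⊤]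
        fun w => gaussianMixture μ m (‖w‖ ^ 2) :=
    h.isBigO_norm_pow_mul_gaussianMixture hα0 hα1 hm
  refine .of_hasFDerivAt (fun w => (hasStrictFDerivAt_norm_sq w).hasFDerivAt.mul
    (h.hasFDerivAt_gaussianMixture hα0 (by positivity) w)) (hbig (by norm_num)) ?_
  simp only [smul_smul, ← Nat.cast_smul_eq_nsmul ℝ]
  refine ((isBigO_smul_innerSL _).trans ?_).add ((isBigO_smul_innerSL _).trans ?_)
  · refine ((hbig (j := 2) (k := 3) (by norm_num)).const_mul_left (-(1 / 2))).congr_left fun w => ?_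
    rw [add_assoc m, one_add_one_eq_two]
    ring
  · refine ((hbig (j := 1) (k := 1) (by norm_num)).const_mul_left 2).congr_left fun w => ?_
    push_cast
    ring

end InnerProductSpace

/-! ### Subordination and scaling of the heat kernel -/

lemma IsStableLaw.integral_exp_neg_norm_sq_mul {V : Type*} [NormedAddCommGroup V] {μ : Measure ℝ}
    {σ : ℝ} (h : IsStableLaw (σ / 2) μ) (ξ : V) :
    ∫ s, rexp (-(‖ξ‖ ^ 2 * s)) ∂μ = rexp (-‖ξ‖ ^ σ) := by
  rw [h.integral_exp_neg_mul _ (sq_nonneg _), ← rpow_natCast, ← rpow_mul (norm_nonneg _),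
    Nat.cast_ofNat, mul_div_cancel₀ _ two_ne_zero]

section Fourier

variable {V : Type*} [NormedAddCommGroup V] [InnerProductSpace ℝ V]

lemma norm_cexp_I_mul_inner (w ξ : V) : ‖Complex.exp (Complex.I * (⟪w, ξ⟫_ℝ : ℂ))‖ = 1 := by
  rw [mul_comm, Complex.norm_exp_ofReal_mul_I]

lemma norm_ofReal_mul_cexp_inner (a : ℝ) (w ξ : V) :
    ‖(a : ℂ) * Complex.exp (Complex.I * (⟪w, ξ⟫_ℝ : ℂ))‖ = ‖a‖ := by
  rw [norm_mul, norm_cexp_I_mul_inner, mul_one, Complex.norm_real]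

variable [FiniteDimensional ℝ V] [MeasurableSpace V] [BorelSpace V]

lemma integrable_norm_rpow_mul_exp_neg {p σ b : ℝ} (hp : 0 ≤ p) (hσ : 0 < σ)
    (hb : 0 < b) : Integrable (fun ξ : V => ‖ξ‖ ^ p * rexp (-b * ‖ξ‖ ^ σ)) := by
  rcases subsingleton_or_nontrivial V with _ | _
  · exact Integrable.of_finite
  refine (integrable_fun_norm_addHaar (volume : Measure V)
    (f := fun y : ℝ => y ^ p * rexp (-b * y ^ σ))).2 ?_
  refine (integrableOn_rpow_mul_exp_neg_mul_rpow (s := (Module.finrank ℝ V - 1 : ℕ) + p)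
    (by linarith [Nat.cast_nonneg (α := ℝ) (Module.finrank ℝ V - 1)]) hσ hb).congr_fun
    (fun y hy => ?_) measurableSet_Ioi
  beta_reduce
  rw [rpow_add hy, rpow_natCast, mul_assoc, smul_eq_mul]

lemma integral_gaussian_mul_cexp_inner {s : ℝ} (hs : 0 < s) (w : V) :
    ∫ ξ : V, (rexp (-(‖ξ‖ ^ 2 * s)) : ℂ) * Complex.exp (Complex.I * (⟪w, ξ⟫_ℝ : ℂ)) =
      ((π ^ ((Module.finrank ℝ V : ℝ) / 2) *
        (s ^ (-((Module.finrank ℝ V : ℝ) / 2)) * rexp (-(‖w‖ ^ 2 / (4 * s)))) : ℝ) : ℂ) := by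
  have hexp : ∀ ξ : V, (rexp (-(‖ξ‖ ^ 2 * s)) : ℂ) * Complex.exp (Complex.I * (⟪w, ξ⟫_ℝ : ℂ)) =
      Complex.exp (-(s : ℂ) * ‖ξ‖ ^ 2 + Complex.I * (⟪w, ξ⟫_ℝ : ℂ)) := fun ξ => by
    rw [Complex.exp_add]
    push_cast
    ring_nf
  simp_rw [hexp]
  rw [GaussianFourier.integral_cexp_neg_mul_sq_norm_add (by simpa using hs), Complex.I_sq,
    ← mul_assoc, rpow_neg hs.le, ← div_eq_mul_inv, ← div_rpow pi_pos.le hs.le, Complex.ofReal_mul,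
    Complex.ofReal_cpow (by positivity)]
  push_cast
  congr 2
  ring

namespace IsStableLaw

variable {μ : Measure ℝ} [IsProbabilityMeasure μ] {σ : ℝ}

lemma integrable_gaussian_mul_cexp_inner (h : IsStableLaw (σ / 2) μ) (hσ : 0 < σ) (w : V) :
    Integrable (fun p : V × ℝ => (rexp (-(‖p.1‖ ^ 2 * p.2)) : ℂ) *
      Complex.exp (Complex.I * (⟪w, p.1⟫_ℝ : ℂ))) (volume.prod μ) := by
  rw [integrable_prod_iff (Measurable.aestronglyMeasurable (by fun_prop))]
  simp only [norm_ofReal_mul_cexp_inner, Real.norm_of_nonneg (exp_pos _).le,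
    h.integral_exp_neg_norm_sq_mul]
  refine ⟨ae_of_all _ fun ξ => ((h.integrable_exp_neg_mul (sq_nonneg ‖ξ‖)).ofReal).mul_const _, ?_⟩
  simpa using integrable_norm_rpow_mul_exp_neg (V := V) (p := 0) (b := 1) le_rfl hσ one_pos

lemma integral_exp_neg_norm_rpow_mul_cexp_inner (h : IsStableLaw (σ / 2) μ) (hσ : 0 < σ) (w : V) :
    ∫ ξ : V, (rexp (-‖ξ‖ ^ σ) : ℂ) * Complex.exp (Complex.I * (⟪w, ξ⟫_ℝ : ℂ)) =
      ((π ^ ((Module.finrank ℝ V : ℝ) / 2) *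
        gaussianMixture μ ((Module.finrank ℝ V : ℝ) / 2) (‖w‖ ^ 2) : ℝ) : ℂ) := by
  have hsubord : ∀ ξ : V, (rexp (-‖ξ‖ ^ σ) : ℂ) * Complex.exp (Complex.I * (⟪w, ξ⟫_ℝ : ℂ)) =
      ∫ s, (rexp (-(‖ξ‖ ^ 2 * s)) : ℂ) * Complex.exp (Complex.I * (⟪w, ξ⟫_ℝ : ℂ)) ∂μ := fun ξ => by
    rw [integral_mul_const, integral_complex_ofReal, h.integral_exp_neg_norm_sq_mul]
  simp_rw [hsubord]
  rw [integral_integral_swap (h.integrable_gaussian_mul_cexp_inner hσ w), gaussianMixture,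
    ← integral_const_mul, ← integral_complex_ofReal]
  exact integral_congr_ae (h.ae_pos.mono fun s hs => integral_gaussian_mul_cexp_inner hs w)

end IsStableLaw

end Fourier

/-- The heat kernel at time `t` of the fractional Laplacian `(−Δ)^{σ/2}` on `ℝ^n`, whose profile at
time `1` is `Psi n σ`. -/
def fracHeatKernel (n : ℕ) (σ t : ℝ) (w : Eu n) : ℝ :=
  (2 * π) ^ (-(n : ℝ)) *
    (∫ ξ : Eu n, (rexp (-(t * ‖ξ‖ ^ σ)) : ℂ) * Complex.exp (Complex.I * (⟪w, ξ⟫_ℝ : ℂ))).re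

section Profile

variable {n : ℕ} {σ : ℝ}

lemma fracHeatKernel_eq_psi {t : ℝ} (hσ : 0 < σ) (ht : 0 < t) (w : Eu n) :
    fracHeatKernel n σ t w = (t ^ (-σ⁻¹)) ^ n * Psi n σ (t ^ (-σ⁻¹) • w) := by
  have hR : 0 < t ^ σ⁻¹ := by positivity
  have hnorm : ∀ ξ : Eu n, ‖t ^ σ⁻¹ • ξ‖ ^ σ = t * ‖ξ‖ ^ σ := fun ξ => by
    rw [norm_smul, Real.norm_of_nonneg hR.le, mul_rpow hR.le (norm_nonneg _), ← rpow_mul ht.le,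
      inv_mul_cancel₀ hσ.ne', rpow_one]
  have hinner : ∀ ξ : Eu n, ⟪t ^ (-σ⁻¹) • w, t ^ σ⁻¹ • ξ⟫_ℝ = ⟪w, ξ⟫_ℝ := fun ξ => by
    rw [real_inner_smul_left, real_inner_smul_right, ← mul_assoc, ← rpow_add ht, neg_add_cancel,
      rpow_zero, one_mul]
  have hchange := Measure.integral_comp_smul (volume : Measure (Eu n))
    (fun ξ : Eu n => (rexp (-‖ξ‖ ^ σ) : ℂ) *
      Complex.exp (Complex.I * (⟪t ^ (-σ⁻¹) • w, ξ⟫_ℝ : ℂ))) (t ^ σ⁻¹)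
  simp only [hnorm, hinner] at hchange
  rw [finrank_euclideanSpace, Fintype.card_fin, abs_of_pos (by positivity), ← inv_pow,
    ← rpow_neg ht.le, Complex.real_smul] at hchange
  rw [fracHeatKernel, Psi, hchange, Complex.re_ofReal_mul]
  ring

lemma hasDerivAt_fracHeatKernel (hσ : 0 < σ) (w : Eu n) :
    HasDerivAt (fun t => fracHeatKernel n σ t w) (-LPsi n σ w) 1 := by
  have hint : Integrable (fun ξ : Eu n => (rexp (-(1 * ‖ξ‖ ^ σ)) : ℂ) *
      Complex.exp (Complex.I * (⟪w, ξ⟫_ℝ : ℂ))) := by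
    refine (integrable_norm_rpow_mul_exp_neg (p := 0) (b := 1) le_rfl hσ one_pos).mono'
      (Measurable.aestronglyMeasurable (by fun_prop)) (ae_of_all _ fun ξ => ?_)
    rw [norm_ofReal_mul_cexp_inner, Real.norm_of_nonneg (exp_pos _).le, rpow_zero, neg_mul,
      one_mul, one_mul]
  have hbound : ∀ ξ : Eu n, ∀ t ∈ ball (1 : ℝ) (1 / 2),
      ‖((-(‖ξ‖ ^ σ * rexp (-(t * ‖ξ‖ ^ σ))) : ℝ) : ℂ) *
        Complex.exp (Complex.I * (⟪w, ξ⟫_ℝ : ℂ))‖ ≤ ‖ξ‖ ^ σ * rexp (-(1 / 2) * ‖ξ‖ ^ σ) := by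
    intro ξ t ht
    have ht : 1 / 2 ≤ t := by linarith [(abs_lt.1 (mem_ball_iff_norm.1 ht)).1]
    rw [norm_ofReal_mul_cexp_inner, norm_neg, Real.norm_of_nonneg (by positivity), neg_mul]
    gcongr
  have hderiv : ∀ (ξ : Eu n) (t : ℝ), HasDerivAt (fun t : ℝ => (rexp (-(t * ‖ξ‖ ^ σ)) : ℂ) *
      Complex.exp (Complex.I * (⟪w, ξ⟫_ℝ : ℂ)))
      (((-(‖ξ‖ ^ σ * rexp (-(t * ‖ξ‖ ^ σ))) : ℝ) : ℂ) *
        Complex.exp (Complex.I * (⟪w, ξ⟫_ℝ : ℂ))) t := fun ξ t => by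
    refine HasDerivAt.mul_const (HasDerivAt.ofReal_comp ?_) _
    exact (hasDerivAt_mul_const (‖ξ‖ ^ σ)).fun_neg.exp.congr_deriv (by ring)
  have hdiff := (hasDerivAt_integral_of_dominated_loc_of_deriv_le
    (ball_mem_nhds (1 : ℝ) one_half_pos)
    (Eventually.of_forall fun t => Measurable.aestronglyMeasurable (by fun_prop)) hint
    (Measurable.aestronglyMeasurable (by fun_prop)) (ae_of_all _ hbound)
    (integrable_norm_rpow_mul_exp_neg hσ.le hσ one_half_pos)
    (ae_of_all _ fun ξ t _ => hderiv ξ t)).2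
  refine ((Complex.reCLM.hasFDerivAt.comp_hasDerivAt (1 : ℝ) hdiff).const_mul
    ((2 * π) ^ (-(n : ℝ)))).congr_deriv ?_
  simp only [one_mul, Complex.ofReal_neg, neg_mul, integral_neg, map_neg, mul_neg,
    Complex.reCLM_apply, LPsi]

-- Euler's identity for the homogeneity `fracHeatKernel_eq_psi`.
lemma lPsi_eq_fderiv_psi (hσ : 0 < σ) {w : Eu n} (hw : DifferentiableAt ℝ (Psi n σ) w) :
    LPsi n σ w = σ⁻¹ * (n * Psi n σ w + fderiv ℝ (Psi n σ) w w) := by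
  have hpow : HasDerivAt (fun t : ℝ => t ^ (-σ⁻¹)) (-σ⁻¹) 1 := by
    simpa using hasDerivAt_rpow_const (x := 1) (p := -σ⁻¹) (Or.inl one_ne_zero)
  have hpsi : HasFDerivAt (Psi n σ) (fderiv ℝ (Psi n σ) w) ((1 : ℝ) ^ (-σ⁻¹) • w) := by
    simpa using hw.hasFDerivAt
  have hscaled := (hpow.pow n).mul (hpsi.comp_hasDerivAt (1 : ℝ) (hpow.smul_const w))
  have hkernel := (hasDerivAt_fracHeatKernel hσ w).congr_of_eventuallyEq
    ((lt_mem_nhds one_pos).mono fun t ht => (fracHeatKernel_eq_psi hσ ht w).symm)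
  have heq := hkernel.unique hscaled
  simp only [Function.comp_apply, Pi.pow_apply, one_rpow, one_pow, one_smul, mul_one, one_mul,
    map_smul, smul_eq_mul] at heq
  linear_combination -heq

variable {μ : Measure ℝ} [IsProbabilityMeasure μ]

lemma psi_eq_gaussianMixture (h : IsStableLaw (σ / 2) μ) (hσ : 0 < σ) (w : Eu n) :
    Psi n σ w = (4 * π) ^ (-((n : ℝ) / 2)) * gaussianMixture μ ((n : ℝ) / 2) (‖w‖ ^ 2) := by
  have hconst : (2 * π) ^ (-(n : ℝ)) * π ^ ((n : ℝ) / 2) = (4 * π) ^ (-((n : ℝ) / 2)) := by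
    have hsq : (2 * π) ^ (-(n : ℝ)) = (4 * π * π) ^ (-((n : ℝ) / 2)) := by
      rw [show 4 * π * π = (2 * π) ^ (2 : ℝ) by rw [rpow_two]; ring, ← rpow_mul (by positivity)]
      ring_nf
    rw [hsq, mul_rpow (by positivity) pi_pos.le, mul_assoc, ← rpow_add pi_pos, neg_add_cancel,
      rpow_zero, mul_one]
  rw [Psi, h.integral_exp_neg_norm_rpow_mul_cexp_inner hσ, Complex.ofReal_re,
    finrank_euclideanSpace_fin, ← mul_assoc, hconst]

lemma lPsi_eq_gaussianMixture (h : IsStableLaw (σ / 2) μ) (hσ : 0 < σ) (w : Eu n) :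
    LPsi n σ w = σ⁻¹ * (4 * π) ^ (-((n : ℝ) / 2)) *
      (n * gaussianMixture μ ((n : ℝ) / 2) (‖w‖ ^ 2) +
        -(1 / 2) * (‖w‖ ^ 2 * gaussianMixture μ ((n : ℝ) / 2 + 1) (‖w‖ ^ 2))) := by
  have hderiv : HasFDerivAt (Psi n σ) _ w :=
    ((h.hasFDerivAt_gaussianMixture (by positivity) (by positivity)
      w).const_mul _).congr_of_eventuallyEq (Eventually.of_forall (psi_eq_gaussianMixture h hσ))
  rw [lPsi_eq_fderiv_psi hσ hderiv.differentiableAt, hderiv.fderiv, psi_eq_gaussianMixture h hσ]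
  simp only [smul_apply, innerSL_apply_apply, real_inner_self_eq_norm_sq, smul_eq_mul]
  ring

end Profile

section Domination

variable {σ : ℝ}

lemma psi_pos (hσ0 : 0 < σ) (hσ2 : σ < 2) {n : ℕ} (w : Eu n) : 0 < Psi n σ w := by
  obtain ⟨μ, _, h⟩ := exists_isStableLaw (α := σ / 2) (by linarith) (by linarith)
  rw [psi_eq_gaussianMixture h hσ0]
  exact mul_pos (by positivity)
    (h.gaussianMixture_pos (by positivity) (by positivity) (sq_nonneg ‖w‖))

lemma dominatedBy_psi_and_lPsi (hσ0 : 0 < σ) (hσ2 : σ < 2) (n : ℕ) :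
    DominatedBy (Psi n σ) (Psi n σ) ∧ DominatedBy (LPsi n σ) (Psi n σ) := by
  obtain ⟨μ, _, h⟩ := exists_isStableLaw (α := σ / 2) (by linarith) (by linarith)
  have hmixture : (fun w : Eu n => gaussianMixture μ ((n : ℝ) / 2) (‖w‖ ^ 2)) =O[⊤] Psi n σ := by
    simpa only [funext (psi_eq_gaussianMixture h hσ0)] using
      isBigO_self_const_mul (by positivity) _ ⊤
  have hgauss := h.dominatedBy_gaussianMixture (E := Eu n) (m := (n : ℝ) / 2) (by positivity)
    (by linarith) (by positivity)
  have hsq := h.dominatedBy_norm_sq_mul_gaussianMixture (E := Eu n) (m := (n : ℝ) / 2)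
    (by positivity) (by linarith) (by positivity)
  constructor
  · rw [funext (psi_eq_gaussianMixture h hσ0)] at hmixture ⊢
    exact (hgauss.const_mul _).trans_isBigO hmixture
  · rw [funext (lPsi_eq_gaussianMixture h hσ0)]
    exact (((hgauss.const_mul _).add (hsq.const_mul _)).const_mul _).trans_isBigO hmixture

variable {M : ℕ} (n : Fin M → ℕ)

lemma phiProd_pos (hσ0 : 0 < σ) (hσ2 : σ < 2) (x : XSp n) : 0 < PhiProd n σ x :=
  Finset.prod_pos fun _ _ => psi_pos hσ0 hσ2 _

lemma dominatedBy_psi_proj (hσ0 : 0 < σ) (hσ2 : σ < 2) (k : Fin M) :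
    DominatedBy (fun x : XSp n => Psi (n k) σ (x k)) fun x => Psi (n k) σ (x k) :=
  (dominatedBy_psi_and_lPsi hσ0 hσ2 (n k)).1.comp_continuousLinearMap
    (PiLp.proj 2 (fun k => Eu (n k)) k : XSp n →L[ℝ] Eu (n k))

lemma dominatedBy_phiProd (hσ0 : 0 < σ) (hσ2 : σ < 2) :
    DominatedBy (PhiProd n σ) (PhiProd n σ) :=
  .prod Finset.univ (dominatedBy_psi_proj n hσ0 hσ2)

lemma dominatedBy_lPhiProd (hσ0 : 0 < σ) (hσ2 : σ < 2) :
    DominatedBy (LPhiProd n σ) (PhiProd n σ) := by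
  refine .sum Finset.univ fun k _ => ?_
  have hfactor : PhiProd n σ = fun x => Psi (n k) σ (x k) *
      ∏ i ∈ Finset.univ.erase k, Psi (n i) σ (x i) := funext fun x =>
    (Finset.mul_prod_erase _ (fun i => Psi (n i) σ (x i)) (Finset.mem_univ k)).symm
  rw [hfactor]
  exact ((dominatedBy_psi_and_lPsi hσ0 hσ2 (n k)).2.comp_continuousLinearMap
    (PiLp.proj 2 (fun k => Eu (n k)) k : XSp n →L[ℝ] Eu (n k))).mul
    (.prod _ (dominatedBy_psi_proj n hσ0 hσ2))

end Domination

/-- For the sum of lower-dimensional fractional Laplacians, the profile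
`Φ` is strictly positive and `|𝓛Φ|`, `|∇Φ|` and `|∇𝓛Φ|` are bounded by a multiple of `Φ`. -/
theorem stmt13 (M : ℕ) (hM : 1 ≤ M) (n : Fin M → ℕ) (hn : ∀ k, 1 ≤ n k)
    (N : ℕ) (hN : ∑ k, n k = N) (σ : ℝ) (hσ0 : 0 < σ) (hσ2 : σ < 2) :
    (∀ x : XSp n, 0 < PhiProd n σ x) ∧
    ∃ c > (0 : ℝ), ∀ x : XSp n,
      |LPhiProd n σ x| ≤ c * PhiProd n σ x ∧
      ‖fderiv ℝ (PhiProd n σ) x‖ ≤ c * PhiProd n σ x ∧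
      ‖fderiv ℝ (LPhiProd n σ) x‖ ≤ c * PhiProd n σ x := by
  have hΦ := phiProd_pos n hσ0 hσ2
  have hdomΦ := dominatedBy_phiProd n hσ0 hσ2
  have hdomLΦ := dominatedBy_lPhiProd n hσ0 hσ2
  obtain ⟨c, hc, hbound⟩ :=
    (hdomLΦ.isBigO.prod_left (hdomΦ.isBigO_fderiv.prod_left hdomLΦ.isBigO_fderiv)).exists_pos
  refine ⟨hΦ, c, hc, fun x => ?_⟩
  simpa only [Prod.norm_mk, max_le_iff, Real.norm_eq_abs, abs_of_pos (hΦ x)] using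
    isBigOWith_top.1 hbound x
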